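/- arXiv:2404.05239 — 7 statements merged into one kernel-verified Lean document; each statement's English description precedes it below -/
import Mathlib

section
/- Let M, K be positive integers, τ > 0, σ² > 0, κ_t ≥ 0, κ_r ≥ 0, and let R₁,…,R_K be M×M Hermitian positive semidefinite complex matrices with tr(R_k) > 0 for a fixed index k. Define Ψ̃ := τ·R_k + κ_t·Σ_{i=1}^K R_i + κ_r·Σ_{i=1}^K (I_M ∘ R_i), and for ρ > 0 define Ψ(ρ) := τρ·R_k + ρκ_t·Σ_{i=1}^K R_i + ρκ_r·Σ_{i=1}^K (I_M ∘ R_i) + σ²·I_M. Assume Ψ̃ is invertible. Then Ψ(ρ) is invertible for all ρ > 0 and lim_{ρ→∞} tr(R_k − τρ·R_k·Ψ(ρ)⁻¹·R_k)/tr(R_k) = tr(R_k − τ·R_k·Ψ̃⁻¹·R_k)/tr(R_k). Moreover, if κ_t = κ_r = 0 and R_k is invertible, this limit equals 0. -/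
open Matrix ComplexOrder

/-!
The identity behind everything is `Ψ ρ = ρ • Ψt + σ2 • 1`. The matrix `Ψt` is positive semidefinite
(the terms `1 ⊙ R i` by the Schur product theorem), so `Ψ ρ` is positive definite, hence invertible. Pulling the scalar `ρ` inside the inverse gives
`ρ • (Ψ ρ)⁻¹ = (Ψt + (σ2 / ρ) • 1)⁻¹`, which tends to `Ψt⁻¹` because matrix inversion is continuous at
the invertible matrix `Ψt`; the error is a continuous function of this inverse. Without hardware
impairments `Ψt = τ • R k`, and then `τ • (R k * Ψt⁻¹ * R k) = R k`.
-/

lemma tendsto_inv_add_div_smul_one {n : Type*} [Fintype n] [DecidableEq n] {A : Matrix n n ℂ}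
    (hA : IsUnit A) (s : ℝ) :
    Filter.Tendsto (fun ρ : ℝ => (A + ((s / ρ : ℝ) : ℂ) • (1 : Matrix n n ℂ))⁻¹)
      Filter.atTop (nhds A⁻¹) := by
  have hdet : A.det ≠ 0 := ((Matrix.isUnit_iff_isUnit_det A).mp hA).ne_zero
  have hc : ContinuousAt Ring.inverse A.det := by
    rw [Ring.inverse_eq_inv']
    exact continuousAt_inv₀ hdet
  refine (continuousAt_matrix_inv A hc).tendsto.comp ?_
  have h0 : Filter.Tendsto (fun ρ : ℝ => ((s / ρ : ℝ) : ℂ)) Filter.atTop (nhds ((0 : ℝ) : ℂ)) :=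
    (Complex.continuous_ofReal.tendsto 0).comp (Filter.tendsto_id.const_div_atTop s)
  simpa using (h0.smul_const (1 : Matrix n n ℂ)).const_add A

lemma smul_inv_smul_add {n : Type*} [Fintype n] [DecidableEq n] (A : Matrix n n ℂ)
    (s : ℝ) {ρ : ℝ} (hρ : ρ ≠ 0)
    (hU : IsUnit ((ρ : ℂ) • A + (s : ℂ) • (1 : Matrix n n ℂ))) :
    (ρ : ℂ) • ((ρ : ℂ) • A + (s : ℂ) • (1 : Matrix n n ℂ))⁻¹ =
      (A + ((s / ρ : ℝ) : ℂ) • (1 : Matrix n n ℂ))⁻¹ := by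
  have hρ' : (ρ : ℂ) ≠ 0 := by exact_mod_cast hρ
  have hfac : (ρ : ℂ) • (A + ((s / ρ : ℝ) : ℂ) • (1 : Matrix n n ℂ)) =
      (ρ : ℂ) • A + (s : ℂ) • (1 : Matrix n n ℂ) := by
    rw [smul_add, smul_smul]
    congr 2
    push_cast
    field_simp
  symm
  apply Matrix.inv_eq_right_inv
  rw [Matrix.mul_smul, ← Matrix.smul_mul, hfac]
  exact Matrix.mul_nonsing_inv _ ((Matrix.isUnit_iff_isUnit_det _).mp hU)

/-- Corollary 1 of the paper: as the pilot power ρ → ∞, the NMSE of the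
LMMSE channel estimator converges to the hardware-impairment floor
tr(R_k − τ·R_kΨ̃⁻¹R_k)/tr(R_k), which vanishes under ideal hardware
(κ_t = κ_r = 0) when R_k is invertible. -/
theorem stmt_5 {M K : ℕ} (hM : 0 < M) (hKpos : 0 < K)
    (τ σ2 κt κr : ℝ) (hτ : 0 < τ) (hσ2 : 0 < σ2) (hκt : 0 ≤ κt) (hκr : 0 ≤ κr)
    (R : Fin K → Matrix (Fin M) (Fin M) ℂ)
    (hR : ∀ i, (R i).PosSemidef) (k : Fin K) (htr : 0 < ((R k).trace).re)
    (Ψt : Matrix (Fin M) (Fin M) ℂ)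
    (hΨt : Ψt = (τ : ℂ) • R k + (κt : ℂ) • ∑ i, R i +
      (κr : ℂ) • ∑ i, Matrix.hadamard (1 : Matrix (Fin M) (Fin M) ℂ) (R i))
    (hΨtinv : IsUnit Ψt)
    (Ψ : ℝ → Matrix (Fin M) (Fin M) ℂ)
    (hΨ : ∀ ρ : ℝ, Ψ ρ = ((τ * ρ : ℝ) : ℂ) • R k + ((ρ * κt : ℝ) : ℂ) • ∑ i, R i +
      ((ρ * κr : ℝ) : ℂ) • ∑ i, Matrix.hadamard (1 : Matrix (Fin M) (Fin M) ℂ) (R i) +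
      (σ2 : ℂ) • (1 : Matrix (Fin M) (Fin M) ℂ)) :
    (∀ ρ : ℝ, 0 < ρ → IsUnit (Ψ ρ)) ∧
    Filter.Tendsto
      (fun ρ : ℝ =>
        ((R k - ((τ * ρ : ℝ) : ℂ) • (R k * (Ψ ρ)⁻¹ * R k)).trace).re / ((R k).trace).re)
      Filter.atTop
      (nhds (((R k - (τ : ℂ) • (R k * Ψt⁻¹ * R k)).trace).re / ((R k).trace).re)) ∧
    (κt = 0 → κr = 0 → IsUnit (R k) →
      ((R k - (τ : ℂ) • (R k * Ψt⁻¹ * R k)).trace).re / ((R k).trace).re = 0) := by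
  have hΨρ : ∀ ρ : ℝ, Ψ ρ = (ρ : ℂ) • Ψt + (σ2 : ℂ) • (1 : Matrix (Fin M) (Fin M) ℂ) := by
    intro ρ
    rw [hΨ, hΨt]
    push_cast
    module
  have hpsd : Ψt.PosSemidef := by
    rw [hΨt]
    refine ((hR k).smul ?_).add ((Matrix.posSemidef_sum _ fun i _ => hR i).smul ?_) |>.add
      ((Matrix.posSemidef_sum _ fun i _ => Matrix.PosSemidef.one.hadamard (hR i)).smul ?_)
    · exact_mod_cast hτ.le
    · exact_mod_cast hκt
    · exact_mod_cast hκr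
  have hunit : ∀ ρ : ℝ, 0 < ρ → IsUnit (Ψ ρ) := by
    intro ρ hρ
    rw [hΨρ]
    have h1 : (0 : ℂ) ≤ (ρ : ℂ) := by exact_mod_cast hρ.le
    have h2 : (0 : ℂ) < (σ2 : ℂ) := by exact_mod_cast hσ2
    exact (Matrix.PosDef.posSemidef_add (hpsd.smul h1) (Matrix.PosDef.one.smul h2)).isUnit
  refine ⟨hunit, ?_, ?_⟩
  · have hG : Continuous fun X : Matrix (Fin M) (Fin M) ℂ =>
        ((R k - (τ : ℂ) • (R k * X * R k)).trace).re / ((R k).trace).re := by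
      fun_prop
    refine ((hG.tendsto _).comp (tendsto_inv_add_div_smul_one hΨtinv σ2)).congr' ?_
    filter_upwards [Filter.eventually_gt_atTop 0] with ρ hρ
    have hU := hunit ρ hρ
    rw [hΨρ] at hU
    simp only [Function.comp_apply]
    rw [← smul_inv_smul_add Ψt σ2 hρ.ne' hU, ← hΨρ, Matrix.mul_smul, Matrix.smul_mul, smul_smul,
      ← Complex.ofReal_mul]
  · rintro rfl rfl hRk
    have hτ' : (τ : ℂ) ≠ 0 := by exact_mod_cast hτ.ne'
    have hdet := (Matrix.isUnit_iff_isUnit_det _).mp hRk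
    have hinv : Ψt⁻¹ = (τ : ℂ)⁻¹ • (R k)⁻¹ := by
      apply Matrix.inv_eq_right_inv
      rw [hΨt, Complex.ofReal_zero, zero_smul, zero_smul, add_zero, add_zero, Matrix.smul_mul,
        Matrix.mul_smul, smul_smul, mul_inv_cancel₀ hτ', one_smul, Matrix.mul_nonsing_inv _ hdet]
    rw [hinv, Matrix.mul_smul, Matrix.smul_mul, smul_smul, mul_inv_cancel₀ hτ', one_smul,
      Matrix.mul_nonsing_inv _ hdet, one_mul]
    simp
end

section
/- Let Ṡ, Ï, N̈, P_t, T₁, ζ, κ, Q₁, Q₂ be positive reals and let M, K be positive reals (numbers of BS antennas and users). Define δ_AN := (Ṡ·κ·(K/M)·Q₁) / (κ·Ṡ·K·Q₂/Q₁ + (M/ζ)·(Ï + K·N̈/P_t)·T₁). Then δ_AN < Q₁²/(M·Q₂), and for every δ with 0 < δ < Q₁²/(M·Q₂), the inequality (P_t·Ṡ/K)/(P_t·Ï/K + N̈) > δ·M²·T₁·Q₁/(κ·ζ·K·Q₁² − δ·κ·ζ·M·K·Q₂) holds if and only if δ < δ_AN. -/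
/-!
Put `J = Idot + K * Ndot / Pt`. The user's SINR is `Sdot / J`, and clearing the positive denominators
turns the SINR comparison into the linear inequality
`δ * (κ Sdot K Q₂ M ζ + M² J T₁ Q₁) < Sdot κ K ζ Q₁²`.
Its threshold is `δAN` with numerator and denominator multiplied by `M ζ Q₁`.
Dropping the positive term `M² J T₁ Q₁` from the denominator gives the bound `Q₁² / (M Q₂)`.
-/


/-- Proposition 1 of the paper. Without artificial noise, the secrecy
rate is positive iff the normalized number of eavesdropper antennas δ is below δ_AN
of equation (39). Here `Sdot`, `Idot`, `Ndot` stand for Ṡ, Ï, N̈. -/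
theorem stmt_12 (Sdot Idot Ndot Pt T₁ ζ κ Q₁ Q₂ M K : ℝ)
    (hS : 0 < Sdot) (hI : 0 < Idot) (hN : 0 < Ndot) (hPt : 0 < Pt) (hT₁ : 0 < T₁)
    (hζ : 0 < ζ) (hκ : 0 < κ) (hQ₁ : 0 < Q₁) (hQ₂ : 0 < Q₂) (hM : 0 < M) (hK : 0 < K)
    (δAN : ℝ)
    (hδAN : δAN = (Sdot * κ * (K / M) * Q₁) /
      (κ * Sdot * K * Q₂ / Q₁ + (M / ζ) * (Idot + K * Ndot / Pt) * T₁)) :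
    δAN < Q₁ ^ 2 / (M * Q₂) ∧
    ∀ δ : ℝ, 0 < δ → δ < Q₁ ^ 2 / (M * Q₂) →
      ((Pt * Sdot / K) / (Pt * Idot / K + Ndot) >
        δ * M ^ 2 * T₁ * Q₁ / (κ * ζ * K * Q₁ ^ 2 - δ * κ * ζ * M * K * Q₂)
        ↔ δ < δAN) := by
  obtain ⟨J, hJ⟩ : ∃ J, J = Idot + K * Ndot / Pt := ⟨_, rfl⟩
  have hJ0 : 0 < J := by rw [hJ]; positivity
  have hA : δAN = Sdot * κ * K * ζ * Q₁ ^ 2 /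
      (κ * Sdot * K * Q₂ * M * ζ + M ^ 2 * J * T₁ * Q₁) := by
    rw [hδAN, ← hJ, div_eq_div_iff (by positivity) (by positivity)]
    field_simp
  have hU : (Pt * Sdot / K) / (Pt * Idot / K + Ndot) = Sdot / J := by
    rw [hJ, div_eq_div_iff (by positivity) (by positivity)]
    field_simp
  have hpos : 0 < M ^ 2 * J * T₁ * Q₁ * Q₁ ^ 2 := by positivity
  refine ⟨?_, fun δ _ hδ => ?_⟩
  · rw [hA, div_lt_div_iff₀ (by positivity) (by positivity)]
    linarith
  · rw [lt_div_iff₀ (by positivity)] at hδ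
    have hD : 0 < κ * ζ * K * Q₁ ^ 2 - δ * κ * ζ * M * K * Q₂ := by
      have h : 0 < κ * ζ * K * (Q₁ ^ 2 - δ * (M * Q₂)) :=
        mul_pos (by positivity) (sub_pos.mpr hδ)
      linarith
    rw [hU, hA, gt_iff_lt, div_lt_div_iff₀ hD hJ0, lt_div_iff₀ (by positivity)]
    constructor <;> intro h <;> linarith
end

section
/- Let Ṡ, D̈, ψ, λ, κ, Q₁, Q₂ be positive reals, M > K ≥ 1 positive reals, and δ > 0. Set χ₀ := (1/(M−K) + 2κ + κ²)/(1+κ) and assume δ·K·M·χ₀·Q₂ < K·(1+κ)·Q₁². For ξ ∈ (0,1) define υ(ξ) := 1−ξ+κ, χ̈(ξ) := ((1−ξ)²/(M−K) + 2(1−ξ)κ + κ²)/υ(ξ), and g(ξ) := log₂(1 + ξ·Ṡ/(ξ·ψ + D̈)) − log₂(1 + ξ·δ·M²·λ/(K·υ(ξ)·Q₁² − δ·K·M·χ̈(ξ)·Q₂)). Then lim_{ξ→0⁺} g(ξ)/ξ = (1/ln 2)·(Ṡ/D̈ − δ·M²·λ/(K·(1+κ)·Q₁² − δ·K·M·χ₀·Q₂)),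 and this limit is positive if and only if δ < δ_sec := Ṡ·K·(1+κ)·Q₁² / (M²·λ·D̈ + Ṡ·K·M·((1/(M−K)) + 2κ + κ²)/(1+κ)·Q₂). -/
/-!
Both logarithms have the form `log₂ (1 + ξ q(ξ))` with `q` continuous at `0`. Such a function has
derivative `q(0) / log 2` at `0` (`tendsto_logb_one_add_mul_div`), which gives the limit; the
hypothesis that the eavesdropper's denominator is positive at `ξ = 0` supplies the continuity of the
second `q`. The sign of the limit is then a comparison of two fractions with positive denominators,
which is linear in `δ` after cross-multiplication.
-/

lemma tendsto_logb_one_add_mul_div {q : ℝ → ℝ} (hq : ContinuousAt q 0) :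
    Filter.Tendsto (fun ξ : ℝ => Real.logb 2 (1 + ξ * q ξ) / ξ)
      (nhdsWithin 0 (Set.Ioi 0)) (nhds (q 0 / Real.log 2)) := by
  -- `q` need not be differentiable, so the product rule does not apply: the slope of `ξ * q ξ`
  -- at `0` is `q` itself.
  have h1 : HasDerivAt (fun ξ : ℝ => ξ * q ξ) (q 0) 0 := by
    rw [hasDerivAt_iff_tendsto_slope]
    refine (hq.tendsto.mono_left nhdsWithin_le_nhds).congr' ?_
    filter_upwards [self_mem_nhdsWithin] with ξ hξ
    have hξ : ξ ≠ 0 := hξ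
    simp [slope, hξ]
  have h2 : HasDerivAt (fun ξ : ℝ => Real.logb 2 (1 + ξ * q ξ)) (q 0 / Real.log 2) 0 := by
    have h := ((h1.const_add 1).log (by simp)).div_const (Real.log 2)
    simpa [Real.logb] using h
  rw [hasDerivAt_iff_tendsto_slope] at h2
  refine (h2.mono_left (nhdsWithin_mono 0 fun ξ hξ => ne_of_gt hξ)).congr fun ξ => ?_
  simp [slope, div_eq_inv_mul]


/-- Proposition 2 of the paper. The derivative at ξ = 0⁺ of the secrecy
rate (40) is positive iff the normalized number of eavesdropper antennas δ is below
δ_sec of equation (43). Here `Sdot`, `Ddot` stand for Ṡ, D̈. -/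
theorem stmt_13 (Sdot Ddot ψ lam κ Q₁ Q₂ M K δ : ℝ)
    (hS : 0 < Sdot) (hD : 0 < Ddot) (hψ : 0 < ψ) (hlam : 0 < lam) (hκ : 0 < κ)
    (hQ₁ : 0 < Q₁) (hQ₂ : 0 < Q₂) (hMK : K < M) (hK : 1 ≤ K) (hδ : 0 < δ)
    (χ₀ : ℝ) (hχ₀ : χ₀ = (1 / (M - K) + 2 * κ + κ ^ 2) / (1 + κ))
    (hden : δ * K * M * χ₀ * Q₂ < K * (1 + κ) * Q₁ ^ 2)
    (υ : ℝ → ℝ) (hυ : ∀ ξ, υ ξ = 1 - ξ + κ)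
    (χ : ℝ → ℝ)
    (hχ : ∀ ξ, χ ξ = ((1 - ξ) ^ 2 / (M - K) + 2 * (1 - ξ) * κ + κ ^ 2) / υ ξ)
    (g : ℝ → ℝ)
    (hg : ∀ ξ, g ξ = Real.logb 2 (1 + ξ * Sdot / (ξ * ψ + Ddot)) -
      Real.logb 2 (1 + ξ * δ * M ^ 2 * lam /
        (K * υ ξ * Q₁ ^ 2 - δ * K * M * χ ξ * Q₂)))
    (L δsec : ℝ)
    (hL : L = (1 / Real.log 2) *
      (Sdot / Ddot - δ * M ^ 2 * lam / (K * (1 + κ) * Q₁ ^ 2 - δ * K * M * χ₀ * Q₂)))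
    (hδsec : δsec = Sdot * K * (1 + κ) * Q₁ ^ 2 /
      (M ^ 2 * lam * Ddot + Sdot * K * M * ((1 / (M - K)) + 2 * κ + κ ^ 2) / (1 + κ) * Q₂)) :
    Filter.Tendsto (fun ξ : ℝ => g ξ / ξ) (nhdsWithin 0 (Set.Ioi 0)) (nhds L) ∧
    (0 < L ↔ δ < δsec) := by
  have hM : 0 < M := by linarith
  have hK0 : 0 < K := by linarith
  have hMK0 : 0 < M - K := by linarith
  have hκ1 : 0 < 1 + κ := by linarith
  have hχ₀pos : 0 < χ₀ := by rw [hχ₀]; positivity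
  have hden0 : 0 < K * (1 + κ) * Q₁ ^ 2 - δ * K * M * χ₀ * Q₂ := by linarith
  have hlog : 0 < Real.log 2 := Real.log_pos (by norm_num)
  have hυ0 : υ 0 = 1 + κ := by rw [hυ]; ring
  have hχ0 : χ 0 = χ₀ := by rw [hχ, hχ₀, hυ0]; ring
  have hυc : ContinuousAt υ 0 := by
    rw [funext hυ]; fun_prop
  have hχc : ContinuousAt χ 0 := by
    rw [funext hχ]
    exact ContinuousAt.div (by fun_prop) hυc (by rw [hυ0]; exact hκ1.ne')
  have hq₁ : ContinuousAt (fun ξ : ℝ => Sdot / (ξ * ψ + Ddot)) 0 :=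
    ContinuousAt.div (by fun_prop) (by fun_prop) (by simpa using hD.ne')
  have hq₂ : ContinuousAt (fun ξ : ℝ => δ * M ^ 2 * lam /
      (K * υ ξ * Q₁ ^ 2 - δ * K * M * χ ξ * Q₂)) 0 :=
    ContinuousAt.div (by fun_prop) (by fun_prop) (by rw [hυ0, hχ0]; exact hden0.ne')
  constructor
  · have h := (tendsto_logb_one_add_mul_div hq₁).sub (tendsto_logb_one_add_mul_div hq₂)
    have hlim : L = Sdot / (0 * ψ + Ddot) / Real.log 2 -
        δ * M ^ 2 * lam / (K * υ 0 * Q₁ ^ 2 - δ * K * M * χ 0 * Q₂) / Real.log 2 := by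
      rw [hL, hυ0, hχ0, zero_mul, zero_add]; ring
    rw [hlim]
    refine h.congr fun ξ => ?_
    rw [hg, sub_div]
    simp only [← mul_div_assoc, ← mul_assoc]
  · have hδ' : δsec = Sdot * K * (1 + κ) * Q₁ ^ 2 /
        (M ^ 2 * lam * Ddot + Sdot * K * M * χ₀ * Q₂) := by
      rw [hδsec, hχ₀]; simp only [mul_div_assoc]
    rw [hL, mul_pos_iff_of_pos_left (by positivity), sub_pos, div_lt_div_iff₀ hden0 hD, hδ',
      lt_div_iff₀ (by positivity)]
    constructor <;> intro h <;> linarith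
end

section
/- Fix positive reals β₁, β₂, β_I, β₃, β_IE, σ_u², σ_k², τ, ρ, E_u, κ_t, κ_r, integers M > K ≥ 1 and 1 ≤ M_E < M, and ξ ∈ (0,1]. For a transmit power P > 0 and N ∈ ℕ set x(N) = β₂ + β_I·β₁·N, γ̄(N) = x(N)²/(x(N) + σ_u²/(τρ)), Ξ(N) = K·x(N) − γ̄(N), p = ξP/K, q = (1−ξ)P/(M−K), ϖ(P) = M_E·(κ_t P)² + q²·M_E·M·(M−K) + 2q·M_E·(M−K)·κ_t·P; define S₁(N,P) = (ξ·P·M·γ̄(N)/K)/(ξ·P·Ξ(N)/K + (1−ξ)·P·(x(N) − γ̄(N)) + (κ_t+κ_r)·P·x(N) + σ_k²), S₂(N,P) = p·M_E·M·(q(M−K)+κ_t P)·(β₃+β_IE β₁ N)² / (M·(q(M−K)+κ_t P)²·(β₃+β_IE β₁ N)² − ϖ(P)·(β₃² + 2β₃ β_IE N + β_IE² β₁² N²)), and R(N,P) = log₂(1+S₁(N,P)) − log₂(1+S₂(N,P)). Assume M·(1−ξ+κ_t)² > M_E·(κ_t² + M·(1−ξ)²/(M−K) + 2(1−ξ)·κ_t).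 Then, with the transmit power scaled as P = E_u/N, the denominator of S₂(N, E_u/N) is positive for all sufficiently large N and lim_{N→∞} R(N, E_u/N) = log₂(1 + (ξ·E_u·M·β_I·β₁/K)/(ξ·E_u·(K−1)·β_I·β₁/K + (κ_t+κ_r)·E_u·β_I·β₁ + σ_k²)) − log₂(1 + (ξ·M_E·M·(1−ξ+κ_t)/K)/(M·(1−ξ+κ_t)² − M_E·(κ_t² + M·(1−ξ)²/(M−K) + 2(1−ξ)·κ_t))). -/
/-!
With `u = 1/N` and `P = Eu * u`, the common factors `P²` and `N²` cancel from `S₂`, and the factor `N`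
hidden in `x N` and `γbar N` cancels against `P` in `S₁`. Thus, for `N ≠ 0`, both `P * x N` and
`P * γbar N` are functions of `u` that tend to `Eu * βI * β₁` as `u → 0`; in particular the
channel estimation error term `P * (x N - γbar N)` disappears in the limit. Likewise the two
quadratics in `N` appearing in `den₂`, divided by `N²`, both tend to `(βIE * β₁)²`, so `den₂` divided
by `P² * N² = Eu²` tends to `(βIE * β₁)²` times a constant which the main hypothesis makes positive.
The rate converges because both limiting arguments of `logb 2` are positive.
-/


/-- Corollary 4 of the paper (equation (49)). Under the power scaling
P = E_u/N, the closed-form ergodic secrecy rate (48) converges, as the number N of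
RIS elements grows, to a non-degenerate limit. -/
theorem stmt_14 (β₁ β₂ βI β₃ βIE σu2 σk2 τ ρ Eu κt κr : ℝ)
    (hβ₁ : 0 < β₁) (hβ₂ : 0 < β₂) (hβI : 0 < βI) (hβ₃ : 0 < β₃) (hβIE : 0 < βIE)
    (hσu2 : 0 < σu2) (hσk2 : 0 < σk2) (hτ : 0 < τ) (hρ : 0 < ρ) (hEu : 0 < Eu)
    (hκt : 0 < κt) (hκr : 0 < κr)
    (M K ME : ℕ) (hKM : K < M) (hK : 1 ≤ K) (hME : 1 ≤ ME) (hMEM : ME < M)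
    (ξ : ℝ) (hξ : ξ ∈ Set.Ioc (0 : ℝ) 1)
    (x γbar Ξ : ℕ → ℝ)
    (hx : ∀ N : ℕ, x N = β₂ + βI * β₁ * N)
    (hγbar : ∀ N : ℕ, γbar N = (x N) ^ 2 / (x N + σu2 / (τ * ρ)))
    (hΞ : ∀ N : ℕ, Ξ N = K * x N - γbar N)
    (p q ϖ : ℝ → ℝ)
    (hp : ∀ P : ℝ, p P = ξ * P / K)
    (hq : ∀ P : ℝ, q P = (1 - ξ) * P / ((M : ℝ) - K))
    (hϖ : ∀ P : ℝ, ϖ P = ME * (κt * P) ^ 2 + (q P) ^ 2 * ME * M * ((M : ℝ) - K) +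
      2 * q P * ME * ((M : ℝ) - K) * κt * P)
    (S₁ den₂ S₂ R : ℕ → ℝ → ℝ)
    (hS₁ : ∀ N P, S₁ N P = (ξ * P * M * γbar N / K) /
      (ξ * P * Ξ N / K + (1 - ξ) * P * (x N - γbar N) + (κt + κr) * P * x N + σk2))
    (hden₂ : ∀ N P, den₂ N P =
      M * (q P * ((M : ℝ) - K) + κt * P) ^ 2 * (β₃ + βIE * β₁ * N) ^ 2 -
      ϖ P * (β₃ ^ 2 + 2 * β₃ * βIE * N + βIE ^ 2 * β₁ ^ 2 * (N : ℝ) ^ 2))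
    (hS₂ : ∀ N P, S₂ N P = p P * ME * M * (q P * ((M : ℝ) - K) + κt * P) *
      (β₃ + βIE * β₁ * N) ^ 2 / den₂ N P)
    (hR : ∀ N P, R N P = Real.logb 2 (1 + S₁ N P) - Real.logb 2 (1 + S₂ N P))
    (hmain : (M : ℝ) * (1 - ξ + κt) ^ 2 >
      ME * (κt ^ 2 + M * (1 - ξ) ^ 2 / ((M : ℝ) - K) + 2 * (1 - ξ) * κt)) :
    (∀ᶠ N : ℕ in Filter.atTop, 0 < den₂ N (Eu / N)) ∧
    Filter.Tendsto (fun N : ℕ => R N (Eu / N)) Filter.atTop (nhds (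
      Real.logb 2 (1 + (ξ * Eu * M * βI * β₁ / K) /
        (ξ * Eu * ((K : ℝ) - 1) * βI * β₁ / K + (κt + κr) * Eu * βI * β₁ + σk2)) -
      Real.logb 2 (1 + (ξ * ME * M * (1 - ξ + κt) / K) /
        ((M : ℝ) * (1 - ξ + κt) ^ 2 -
          ME * (κt ^ 2 + M * (1 - ξ) ^ 2 / ((M : ℝ) - K) + 2 * (1 - ξ) * κt))))) := by
  obtain ⟨hξ0, hξ1⟩ := hξ
  have hKpos : (0 : ℝ) < K := by exact_mod_cast hK
  have hK1 : (0 : ℝ) ≤ (K : ℝ) - 1 := by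
    have : (1 : ℝ) ≤ K := by exact_mod_cast hK
    linarith
  have hMpos : (0 : ℝ) < M := by exact_mod_cast (by omega : 0 < M)
  have hMK : (0 : ℝ) < (M : ℝ) - K := by
    have : (K : ℝ) < M := by exact_mod_cast hKM
    linarith
  have hMEpos : (0 : ℝ) < ME := by exact_mod_cast hME
  have hc : 0 < σu2 / (τ * ρ) := by positivity
  set c := σu2 / (τ * ρ)
  have ha : 0 ≤ 1 - ξ := by linarith
  have haκ : 0 < 1 - ξ + κt := by linarith
  set W : ℝ := ME * (κt ^ 2 + M * (1 - ξ) ^ 2 / ((M : ℝ) - K) + 2 * (1 - ξ) * κt) with hW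
  have hΔ : 0 < (M : ℝ) * (1 - ξ + κt) ^ 2 - W := by linarith
  set Δ : ℝ := (M : ℝ) * (1 - ξ + κt) ^ 2 - W with hΔdef
  have hqm : ∀ P, q P * ((M : ℝ) - K) = (1 - ξ) * P := by
    intro P
    rw [hq]
    field_simp
  have hϖ' : ∀ P, ϖ P = P ^ 2 * W := by
    intro P
    rw [hϖ, hq, hW]
    field_simp
  have hu : Filter.Tendsto (fun N : ℕ => ((N : ℝ))⁻¹) Filter.atTop (nhds 0) :=
    tendsto_inv_atTop_nhds_zero_nat
  have hNpos : ∀ᶠ N : ℕ in Filter.atTop, (0 : ℝ) < N := by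
    filter_upwards [Filter.eventually_gt_atTop 0] with N hN
    exact_mod_cast hN
  have hb : 0 < βI * β₁ := by positivity
  have hPx : Filter.Tendsto (fun N : ℕ => Eu / N * x N) Filter.atTop (nhds (Eu * (βI * β₁))) := by
    have h : Filter.Tendsto (fun N : ℕ => Eu * (β₂ * ((N : ℝ))⁻¹ + βI * β₁)) Filter.atTop
        (nhds (Eu * (β₂ * 0 + βI * β₁))) := ((hu.const_mul β₂).add_const _).const_mul Eu
    rw [mul_zero, zero_add] at h
    refine h.congr' ?_
    filter_upwards [hNpos] with N hN
    rw [hx]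
    field_simp
  have hPγ : Filter.Tendsto (fun N : ℕ => Eu / N * γbar N) Filter.atTop
      (nhds (Eu * (βI * β₁))) := by
    have h1 : Filter.Tendsto (fun N : ℕ => β₂ * ((N : ℝ))⁻¹ + βI * β₁) Filter.atTop
        (nhds (β₂ * 0 + βI * β₁)) := (hu.const_mul β₂).add_const _
    rw [mul_zero, zero_add] at h1
    have h2 := (h1.pow 2).div (h1.add (hu.const_mul c)) (by rw [mul_zero, add_zero]; exact hb.ne')
    have h := h2.const_mul Eu
    have e : Eu * ((βI * β₁) ^ 2 / (βI * β₁ + c * 0)) = Eu * (βI * β₁) := by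
      rw [mul_zero, add_zero]
      field_simp
    rw [e] at h
    refine h.congr' ?_
    filter_upwards [hNpos] with N hN
    have hd : 0 < β₂ + βI * β₁ * N + c := by positivity
    have e1 : β₂ * ((N : ℝ))⁻¹ + βI * β₁ = (β₂ + βI * β₁ * N) / N := by field_simp
    have e2 : (β₂ + βI * β₁ * N) / N + c * ((N : ℝ))⁻¹ = (β₂ + βI * β₁ * N + c) / N := by
      field_simp
    simp only [Pi.div_apply]
    rw [hγbar, hx, e1, e2]
    field_simp
  have hS₁lim : Filter.Tendsto (fun N : ℕ => S₁ N (Eu / N)) Filter.atTop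
      (nhds ((ξ * Eu * M * βI * β₁ / K) /
        (ξ * Eu * ((K : ℝ) - 1) * βI * β₁ / K + (κt + κr) * Eu * βI * β₁ + σk2))) := by
    have hnum := hPγ.const_mul (ξ * M / K)
    have hden := ((((hPx.const_mul (K : ℝ)).sub hPγ).const_mul (ξ / K)).add
      ((hPx.sub hPγ).const_mul (1 - ξ))).add (hPx.const_mul (κt + κr)) |>.add_const σk2
    have hlimpos : 0 < ξ * Eu * ((K : ℝ) - 1) * βI * β₁ / K + (κt + κr) * Eu * βI * β₁ + σk2 := by
      positivity
    have e : ξ / K * (K * (Eu * (βI * β₁)) - Eu * (βI * β₁)) +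
        (1 - ξ) * (Eu * (βI * β₁) - Eu * (βI * β₁)) + (κt + κr) * (Eu * (βI * β₁)) + σk2 =
        ξ * Eu * ((K : ℝ) - 1) * βI * β₁ / K + (κt + κr) * Eu * βI * β₁ + σk2 := by ring
    rw [e] at hden
    have e' : ξ * M / K * (Eu * (βI * β₁)) = ξ * Eu * M * βI * β₁ / K := by ring
    rw [e'] at hnum
    refine (hnum.div hden hlimpos.ne').congr fun N => ?_
    simp only [Pi.div_apply]
    rw [hS₁, hΞ]
    congr 1 <;> ring
  -- The two quadratics in `N` entering `den₂`, divided by `N²`.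
  have hA : Filter.Tendsto (fun N : ℕ => (β₃ * ((N : ℝ))⁻¹ + βIE * β₁) ^ 2) Filter.atTop
      (nhds ((βIE * β₁) ^ 2)) := by
    have h := ((hu.const_mul β₃).add_const (βIE * β₁)).pow 2
    rwa [mul_zero, zero_add] at h
  have hB : Filter.Tendsto (fun N : ℕ => β₃ ^ 2 * ((N : ℝ))⁻¹ ^ 2 + 2 * β₃ * βIE * ((N : ℝ))⁻¹ +
      (βIE * β₁) ^ 2) Filter.atTop (nhds ((βIE * β₁) ^ 2)) := by
    have h := (((hu.pow 2).const_mul (β₃ ^ 2)).add (hu.const_mul (2 * β₃ * βIE))).add_const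
      ((βIE * β₁) ^ 2)
    have e : β₃ ^ 2 * (0 : ℝ) ^ 2 + 2 * β₃ * βIE * 0 + (βIE * β₁) ^ 2 = (βIE * β₁) ^ 2 := by ring
    rwa [e] at h
  have hg : 0 < (βIE * β₁) ^ 2 := by positivity
  have hdenlim : Filter.Tendsto (fun N : ℕ => den₂ N (Eu / N)) Filter.atTop
      (nhds (Eu ^ 2 * (Δ * (βIE * β₁) ^ 2))) := by
    have h := ((hA.const_mul ((M : ℝ) * (1 - ξ + κt) ^ 2)).sub (hB.const_mul W)).const_mul (Eu ^ 2)
    rw [← sub_mul, ← hΔdef] at h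
    refine h.congr' ?_
    filter_upwards [hNpos] with N hN
    rw [hden₂, hqm, hϖ']
    field_simp
  have hdenpos : 0 < Eu ^ 2 * (Δ * (βIE * β₁) ^ 2) := by positivity
  have hS₂lim : Filter.Tendsto (fun N : ℕ => S₂ N (Eu / N)) Filter.atTop
      (nhds ((ξ * ME * M * (1 - ξ + κt) / K) / Δ)) := by
    have hnum := hA.const_mul (Eu ^ 2 * (ξ * ME * M * (1 - ξ + κt) / K))
    have h := hnum.div hdenlim hdenpos.ne'
    have e : Eu ^ 2 * (ξ * ME * M * (1 - ξ + κt) / K) * (βIE * β₁) ^ 2 /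
        (Eu ^ 2 * (Δ * (βIE * β₁) ^ 2)) = (ξ * ME * M * (1 - ξ + κt) / K) / Δ := by
      field_simp
    rw [e] at h
    refine h.congr' ?_
    filter_upwards [hNpos] with N hN
    simp only [Pi.div_apply]
    rw [hS₂, hp, hqm]
    congr 1
    field_simp
  refine ⟨hdenlim.eventually (lt_mem_nhds hdenpos), ?_⟩
  simp only [hR]
  refine Filter.Tendsto.sub ?_ ?_
  · exact (hS₁lim.const_add 1).logb (by positivity)
  · exact (hS₂lim.const_add 1).logb (by positivity)
end

section
/- Fix positive reals β₁, β₂, β_I, β₃, β_IE, σ_u², σ_k², τ, ρ, P_t, κ_t, κ_r, integers M > K ≥ 1 and 1 ≤ M_E < M, and ξ ∈ (0,1]. For a transmit power P > 0 and N ∈ ℕ set x(N) = β₂ + β_I·β₁·N, γ̄(N) = x(N)²/(x(N) + σ_u²/(τρ)), Ξ(N) = K·x(N) − γ̄(N), p = ξP/K, q = (1−ξ)P/(M−K), ϖ(P) = M_E·(κ_t P)² + q²·M_E·M·(M−K) + 2q·M_E·(M−K)·κ_t·P; define S₁(N,P) = (ξ·P·M·γ̄(N)/K)/(ξ·P·Ξ(N)/K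 + (1−ξ)·P·(x(N) − γ̄(N)) + (κ_t+κ_r)·P·x(N) + σ_k²), S₂(N,P) = p·M_E·M·(q(M−K)+κ_t P)·(β₃+β_IE β₁ N)² / (M·(q(M−K)+κ_t P)²·(β₃+β_IE β₁ N)² − ϖ(P)·(β₃² + 2β₃ β_IE N + β_IE² β₁² N²)), and R(N,P) = log₂(1+S₁(N,P)) − log₂(1+S₂(N,P)). Assume M·(1−ξ+κ_t)² > M_E·(κ_t² + M·(1−ξ)²/(M−K) + 2(1−ξ)·κ_t). Then the denominator of S₂(N, P_t) is positive for all sufficiently large N and lim_{N→∞} R(N, P_t) = log₂(1 + (ξ·M/K)/(ξ·(K−1)/K + κ_t + κ_r)) − log₂(1 + (ξ·M_E·M·(1−ξ+κ_t)/K)/(M·(1−ξ+κ_t)² − M_E·(κ_t² + M·(1−ξ)²/(M−K) + 2(1−ξ)·κ_t))). -/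
/-!
Everything is a ratio of functions of `N` with known leading behaviour. Since
`x N / N → βI β₁` and `γbar N / N → βI β₁` (the estimation noise `σu2 / (τ ρ)` is bounded while
`x N` grows linearly), dividing the numerator and denominator of `S₁` by `N` makes both converge.
Those of `S₂` converge after division by `N ^ 2`; the denominator tends to
`Pt ^ 2 * (βIE * β₁) ^ 2` times the gap in `hmain`, which is positive. The common factors
`Pt`, `βI β₁` and `βIE β₁` cancel, and `logb 2` is continuous at the positive limits.
-/

open Filter Topology

/-- A quotient converges as soon as numerator and denominator do after division by a common
eventually nonzero scale `s`. -/
lemma tendsto_div_of_scaled {f g s : ℕ → ℝ} {a b : ℝ} (hs : ∀ᶠ N in atTop, s N ≠ 0)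
    (hf : Tendsto (fun N => f N / s N) atTop (𝓝 a))
    (hg : Tendsto (fun N => g N / s N) atTop (𝓝 b)) (hb : b ≠ 0) :
    Tendsto (fun N => f N / g N) atTop (𝓝 (a / b)) := by
  refine (hf.div hg hb).congr' ?_
  filter_upwards [hs] with N hN
  exact div_div_div_cancel_right₀ hN _ _

/-- An affine function of `N` with slope `b`, divided by `N`, tends to `b`. -/
lemma tendsto_affine_div (a b : ℝ) :
    Tendsto (fun N : ℕ => (a + b * N) / (N : ℝ)) atTop (𝓝 b) := by
  have h : Tendsto (fun N : ℕ => a / (N : ℝ) + b) atTop (𝓝 (0 + b)) :=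
    (tendsto_const_div_atTop_nhds_zero_nat a).add_const b
  rw [zero_add] at h
  refine h.congr' ?_
  filter_upwards [eventually_ne_atTop 0] with N hN
  have hN' : (N : ℝ) ≠ 0 := Nat.cast_ne_zero.mpr hN
  field_simp

/-- Corollary 5 of the paper (equation (50)). With fixed total transmit
power P_t, the closed-form ergodic secrecy rate (48) converges, as the number N of
RIS elements grows, to a finite limit independent of P_t and of the path losses. -/
theorem stmt_15 (β₁ β₂ βI β₃ βIE σu2 σk2 τ ρ Pt κt κr : ℝ)
    (hβ₁ : 0 < β₁) (hβ₂ : 0 < β₂) (hβI : 0 < βI) (hβ₃ : 0 < β₃) (hβIE : 0 < βIE)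
    (hσu2 : 0 < σu2) (hσk2 : 0 < σk2) (hτ : 0 < τ) (hρ : 0 < ρ) (hPt : 0 < Pt)
    (hκt : 0 < κt) (hκr : 0 < κr)
    (M K ME : ℕ) (hKM : K < M) (hK : 1 ≤ K) (hME : 1 ≤ ME) (hMEM : ME < M)
    (ξ : ℝ) (hξ : ξ ∈ Set.Ioc (0 : ℝ) 1)
    (x γbar Ξ : ℕ → ℝ)
    (hx : ∀ N : ℕ, x N = β₂ + βI * β₁ * N)
    (hγbar : ∀ N : ℕ, γbar N = (x N) ^ 2 / (x N + σu2 / (τ * ρ)))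
    (hΞ : ∀ N : ℕ, Ξ N = K * x N - γbar N)
    (p q ϖ : ℝ → ℝ)
    (hp : ∀ P : ℝ, p P = ξ * P / K)
    (hq : ∀ P : ℝ, q P = (1 - ξ) * P / ((M : ℝ) - K))
    (hϖ : ∀ P : ℝ, ϖ P = ME * (κt * P) ^ 2 + (q P) ^ 2 * ME * M * ((M : ℝ) - K) +
      2 * q P * ME * ((M : ℝ) - K) * κt * P)
    (S₁ den₂ S₂ R : ℕ → ℝ → ℝ)
    (hS₁ : ∀ N P, S₁ N P = (ξ * P * M * γbar N / K) /
      (ξ * P * Ξ N / K + (1 - ξ) * P * (x N - γbar N) + (κt + κr) * P * x N + σk2))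
    (hden₂ : ∀ N P, den₂ N P =
      M * (q P * ((M : ℝ) - K) + κt * P) ^ 2 * (β₃ + βIE * β₁ * N) ^ 2 -
      ϖ P * (β₃ ^ 2 + 2 * β₃ * βIE * N + βIE ^ 2 * β₁ ^ 2 * (N : ℝ) ^ 2))
    (hS₂ : ∀ N P, S₂ N P = p P * ME * M * (q P * ((M : ℝ) - K) + κt * P) *
      (β₃ + βIE * β₁ * N) ^ 2 / den₂ N P)
    (hR : ∀ N P, R N P = Real.logb 2 (1 + S₁ N P) - Real.logb 2 (1 + S₂ N P))
    (hmain : (M : ℝ) * (1 - ξ + κt) ^ 2 >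
      ME * (κt ^ 2 + M * (1 - ξ) ^ 2 / ((M : ℝ) - K) + 2 * (1 - ξ) * κt)) :
    (∀ᶠ N : ℕ in Filter.atTop, 0 < den₂ N Pt) ∧
    Filter.Tendsto (fun N : ℕ => R N Pt) Filter.atTop (nhds (
      Real.logb 2 (1 + (ξ * M / K) / (ξ * ((K : ℝ) - 1) / K + κt + κr)) -
      Real.logb 2 (1 + (ξ * ME * M * (1 - ξ + κt) / K) /
        ((M : ℝ) * (1 - ξ + κt) ^ 2 -
          ME * (κt ^ 2 + M * (1 - ξ) ^ 2 / ((M : ℝ) - K) + 2 * (1 - ξ) * κt))))) := by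
  obtain ⟨hξ0, hξ1⟩ := hξ
  have hKpos : (0 : ℝ) < K := by exact_mod_cast hK
  have hK1 : (1 : ℝ) ≤ K := by exact_mod_cast hK
  have hMK : (0 : ℝ) < (M : ℝ) - K := sub_pos.mpr (by exact_mod_cast hKM)
  have hMpos : (0 : ℝ) < M := by linarith
  have hMEpos : (0 : ℝ) < ME := by exact_mod_cast hME
  have hN0 : ∀ᶠ N : ℕ in atTop, (N : ℝ) ≠ 0 := by
    filter_upwards [eventually_ne_atTop 0] with N hN
    exact Nat.cast_ne_zero.mpr hN
  have hA : 0 < βI * β₁ := mul_pos hβI hβ₁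
  have hB : 0 < βIE * β₁ := mul_pos hβIE hβ₁
  set A := βI * β₁ with hAdef
  set B := βIE * β₁ with hBdef
  set G := (M : ℝ) * (1 - ξ + κt) ^ 2 -
    ME * (κt ^ 2 + M * (1 - ξ) ^ 2 / ((M : ℝ) - K) + 2 * (1 - ξ) * κt) with hG
  have hGpos : 0 < G := sub_pos.mpr hmain
  have hqPt : q Pt * ((M : ℝ) - K) + κt * Pt = Pt * (1 - ξ + κt) := by
    rw [hq]; field_simp
  have hϖPt : ϖ Pt =
      Pt ^ 2 * (ME * (κt ^ 2 + M * (1 - ξ) ^ 2 / ((M : ℝ) - K) + 2 * (1 - ξ) * κt)) := by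
    rw [hϖ, hq]; field_simp
  have hlin := tendsto_affine_div β₃ B
  have hsq : Tendsto (fun N : ℕ => (β₃ + B * N) ^ 2 / (N : ℝ) ^ 2) atTop (𝓝 (B ^ 2)) := by
    simpa only [div_pow] using hlin.pow 2
  have hquad : Tendsto
      (fun N : ℕ => (β₃ ^ 2 + 2 * β₃ * βIE * N + βIE ^ 2 * β₁ ^ 2 * (N : ℝ) ^ 2) / (N : ℝ) ^ 2)
      atTop (𝓝 (B ^ 2)) := by
    have h := ((tendsto_affine_div (β₃ ^ 2) (2 * β₃ * βIE)).mul
      (tendsto_const_div_atTop_nhds_zero_nat 1)).add_const (B ^ 2)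
    rw [mul_zero, zero_add] at h
    refine h.congr' ?_
    filter_upwards [hN0] with N hN
    rw [hBdef]
    field_simp
  have hden : Tendsto (fun N : ℕ => den₂ N Pt / (N : ℝ) ^ 2) atTop
      (𝓝 (Pt ^ 2 * B ^ 2 * G)) := by
    have h := (hsq.const_mul ((M : ℝ) * (Pt * (1 - ξ + κt)) ^ 2)).sub (hquad.const_mul (ϖ Pt))
    have e : (M : ℝ) * (Pt * (1 - ξ + κt)) ^ 2 * B ^ 2 - ϖ Pt * B ^ 2 = Pt ^ 2 * B ^ 2 * G := by
      rw [hϖPt, hG]; ring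
    rw [e] at h
    refine h.congr fun N => ?_
    rw [hden₂, hqPt]
    ring
  have hdenlim : 0 < Pt ^ 2 * B ^ 2 * G := by positivity
  have hN2 : ∀ᶠ N : ℕ in atTop, (N : ℝ) ^ 2 ≠ 0 := hN0.mono fun N hN => pow_ne_zero 2 hN
  refine ⟨?_, ?_⟩
  · filter_upwards [hden.eventually_const_lt hdenlim, hN2] with N h hN
    exact (div_pos_iff_of_pos_right (lt_of_le_of_ne (sq_nonneg _) hN.symm)).mp h
  have hS2 : Tendsto (fun N : ℕ => S₂ N Pt) atTop
      (𝓝 ((ξ * ME * M * (1 - ξ + κt) / K) / G)) := by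
    have hnum : Tendsto (fun N : ℕ => p Pt * ME * M * (q Pt * ((M : ℝ) - K) + κt * Pt) *
        (β₃ + B * N) ^ 2 / (N : ℝ) ^ 2) atTop
        (𝓝 (p Pt * ME * M * (q Pt * ((M : ℝ) - K) + κt * Pt) * B ^ 2)) := by
      simpa only [mul_div_assoc] using
        hsq.const_mul (p Pt * ME * M * (q Pt * ((M : ℝ) - K) + κt * Pt))
    have h := tendsto_div_of_scaled hN2 hnum hden hdenlim.ne'
    have e : p Pt * ME * M * (q Pt * ((M : ℝ) - K) + κt * Pt) * B ^ 2 / (Pt ^ 2 * B ^ 2 * G) =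
        (ξ * ME * M * (1 - ξ + κt) / K) / G := by
      rw [hqPt, hp]; field_simp
    rw [e] at h
    exact h.congr fun N => (hS₂ N Pt).symm
  have hxl : Tendsto (fun N : ℕ => x N / (N : ℝ)) atTop (𝓝 A) :=
    (tendsto_affine_div β₂ A).congr fun N => by rw [hx]
  have hγl : Tendsto (fun N : ℕ => γbar N / (N : ℝ)) atTop (𝓝 A) := by
    have hc : Tendsto (fun N : ℕ => (x N + σu2 / (τ * ρ)) / (N : ℝ)) atTop (𝓝 A) :=
      (tendsto_affine_div (β₂ + σu2 / (τ * ρ)) A).congr fun N => by rw [hx]; ring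
    -- `γbar N / N = (x N / N) * (x N / (x N + c))`, and the second factor tends to `1`.
    have h := hxl.mul (tendsto_div_of_scaled hN0 hxl hc hA.ne')
    rw [div_self hA.ne', mul_one] at h
    refine h.congr fun N => ?_
    rw [hγbar]
    ring
  have hLpos : 0 < ξ * ((K : ℝ) - 1) / K + κt + κr := by
    have : 0 ≤ ξ * ((K : ℝ) - 1) / K :=
      div_nonneg (mul_nonneg hξ0.le (sub_nonneg.mpr hK1)) hKpos.le
    linarith
  have hS1 : Tendsto (fun N : ℕ => S₁ N Pt) atTop
      (𝓝 ((ξ * M / K) / (ξ * ((K : ℝ) - 1) / K + κt + κr))) := by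
    have hnum : Tendsto (fun N : ℕ => (ξ * Pt * M * γbar N / K) / (N : ℝ)) atTop
        (𝓝 (ξ * Pt * M / K * A)) :=
      (hγl.const_mul (ξ * Pt * M / K)).congr fun N => by ring
    have hd : Tendsto (fun N : ℕ => (ξ * Pt * Ξ N / K + (1 - ξ) * Pt * (x N - γbar N) +
        (κt + κr) * Pt * x N + σk2) / (N : ℝ)) atTop
        (𝓝 (ξ * Pt / K * (K * A - A) + (1 - ξ) * Pt * (A - A) + (κt + κr) * Pt * A + 0)) :=
      ((((((hxl.const_mul (K : ℝ)).sub hγl).const_mul (ξ * Pt / K)).add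
        ((hxl.sub hγl).const_mul ((1 - ξ) * Pt))).add
        (hxl.const_mul ((κt + κr) * Pt))).add
        (tendsto_const_div_atTop_nhds_zero_nat σk2)).congr fun N => by rw [hΞ]; ring
    have e : ξ * Pt / K * (K * A - A) + (1 - ξ) * Pt * (A - A) + (κt + κr) * Pt * A + 0 =
        Pt * A * (ξ * ((K : ℝ) - 1) / K + κt + κr) := by ring
    rw [e] at hd
    have h := tendsto_div_of_scaled hN0 hnum hd (by positivity)
    have e' : ξ * Pt * M / K * A / (Pt * A * (ξ * ((K : ℝ) - 1) / K + κt + κr)) =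
        (ξ * M / K) / (ξ * ((K : ℝ) - 1) / K + κt + κr) := by
      rw [show ξ * Pt * M / K * A = Pt * A * (ξ * M / K) by ring]
      exact mul_div_mul_left _ _ (by positivity)
    rw [e'] at h
    exact h.congr fun N => (hS₁ N Pt).symm
  have hL1 : 0 < 1 + (ξ * M / K) / (ξ * ((K : ℝ) - 1) / K + κt + κr) := by positivity
  have hL2 : 0 < 1 + (ξ * ME * M * (1 - ξ + κt) / K) / G := by
    have : 0 < 1 - ξ + κt := by linarith
    positivity
  exact (((hS1.const_add 1).logb hL1.ne').sub ((hS2.const_add 1).logb hL2.ne')).congr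
    fun N => (hR N Pt).symm
end

section
/- Fix positive reals E_u, β_I, β₁, σ_k², κ_t, κ_r and positive integers K and M_E. For an integer M > max(K, M_E) define L(M) := log₂(1 + (E_u·M·β_I·β₁/K)/((K−1)·E_u·β_I·β₁/K + (κ_t+κ_r)·E_u·β_I·β₁ + σ_k²)) − log₂(1 + M_E·M/(K·κ_t·(M − M_E))). Then L(M) → +∞ as M → ∞; in particular there exists M₀ such that L(M) > 0 for all integers M ≥ M₀ with M > max(K, M_E). -/
/-! The legitimate user's SINR grows linearly in `M`, so the first logarithm tends to infinity.
Since `κt > 0`, the eavesdropper's SINR is finite and tends to `ME / (K * κt)`; for `M ≥ 2 * ME`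
it is at most `2 * ME / (K * κt)`. Hence the difference is bounded below by a sequence
tending to infinity. -/

/-- Remark 1 of the paper. Under the 1/N power scaling and without
artificial noise (ξ = 1), the asymptotic secrecy rate (49) diverges with the number
of BS antennas M; in particular it is eventually positive, so secure communication is
ensured thanks to the transmit distortion κ_t. -/
theorem stmt_16 (Eu βI β₁ σk2 κt κr : ℝ) (K ME : ℕ)
    (hEu : 0 < Eu) (hβI : 0 < βI) (hβ₁ : 0 < β₁) (hσk2 : 0 < σk2)
    (hκt : 0 < κt) (hκr : 0 < κr) (hK : 0 < K) (hME : 0 < ME)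
    (L : ℕ → ℝ)
    (hL : ∀ M : ℕ, L M =
      Real.logb 2 (1 + (Eu * M * βI * β₁ / K) /
        ((K - 1 : ℝ) * Eu * βI * β₁ / K + (κt + κr) * Eu * βI * β₁ + σk2)) -
      Real.logb 2 (1 + ME * M / (K * κt * ((M : ℝ) - ME)))) :
    Filter.Tendsto L Filter.atTop Filter.atTop ∧
    ∃ M₀ : ℕ, ∀ M : ℕ, M₀ ≤ M → max K ME < M → 0 < L M := by
  have hK1 : (1 : ℝ) ≤ K := by exact_mod_cast hK
  have hK0 : (0 : ℝ) < K := by linarith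
  have hME0 : (0 : ℝ) < ME := by exact_mod_cast hME
  set D : ℝ := (K - 1 : ℝ) * Eu * βI * β₁ / K + (κt + κr) * Eu * βI * β₁ + σk2 with hD
  have hD0 : 0 < D := by
    have h1 : (0 : ℝ) ≤ K - 1 := by linarith
    positivity
  -- The user's SINR is linear in `M`, with positive slope `c`.
  obtain ⟨c, hc, hcM⟩ : ∃ c : ℝ, 0 < c ∧
      ∀ M : ℕ, (Eu * M * βI * β₁ / K) / D = c * M :=
    ⟨Eu * βI * β₁ / K / D, by positivity, fun M => by ring⟩
  have huser : Filter.Tendsto (fun M : ℕ => Real.logb 2 (1 + c * M))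
      Filter.atTop Filter.atTop :=
    (Real.tendsto_logb_atTop one_lt_two).comp
      (Filter.tendsto_atTop_add_const_left _ _
        (tendsto_natCast_atTop_atTop.const_mul_atTop hc))
  have hT : Filter.Tendsto L Filter.atTop Filter.atTop := by
    refine Filter.tendsto_atTop_mono' _ ?_
      (Filter.tendsto_atTop_add_const_right _
        (-Real.logb 2 (1 + 2 * ME / (K * κt))) huser)
    -- `M ≥ 2 * ME` gives `M / (M - ME) ≤ 2`.
    filter_upwards [Filter.eventually_ge_atTop (2 * ME)] with M hM
    have hM2 : (2 : ℝ) * ME ≤ M := by exact_mod_cast hM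
    have hsub : (0 : ℝ) < M - ME := by linarith
    have hle : ME * M / (K * κt * ((M : ℝ) - ME)) ≤ 2 * ME / (K * κt) := by
      rw [div_le_div_iff₀ (by positivity) (by positivity)]
      have h : 0 ≤ ME * (K * κt) * ((M : ℝ) - 2 * ME) :=
        mul_nonneg (by positivity) (by linarith)
      linarith
    have hlog : Real.logb 2 (1 + ME * M / (K * κt * ((M : ℝ) - ME))) ≤
        Real.logb 2 (1 + 2 * ME / (K * κt)) :=
      Real.logb_le_logb_of_le one_lt_two (by positivity) (by linarith)
    rw [hL, hcM]
    linarith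
  obtain ⟨M₀, hM₀⟩ := Filter.eventually_atTop.1 (hT.eventually_gt_atTop 0)
  exact ⟨hT, M₀, fun M hM _ => hM₀ M hM⟩
end

section
/- Fix positive reals β₁, β₂, β_I, β₃, β_IE, σ_u², σ_k², τ, ρ, P_t, κ_t, κ_r, a positive integer N, integers K ≥ 1 and M_E ≥ 1, and ξ ∈ (0,1]. Set x = β₂ + β_I·β₁·N, γ̄ = x²/(x + σ_u²/(τρ)), Ξ = K·x − γ̄, B = (β₃ + β_IE·β₁·N)², B' = β₃² + 2β₃·β_IE·N + β_IE²·β₁²·N². For an integer M > max(K, M_E) define p = ξP_t/K, q(M) = (1−ξ)P_t/(M−K), ϖ(M) = M_E·(κ_t P_t)² + q(M)²·M_E·M·(M−K) + 2q(M)·M_E·(M−K)·κ_t·P_t, S₁(M) = (ξ·P_t·M·γ̄/K)/(ξ·P_t·Ξ/K + (1−ξ)·P_t·(x − γ̄) + (κ_t+κ_r)·P_t·x + σ_k²), S₂(M) = p·M_E·M·(q(M)(M−K)+κ_t P_t)·B / (M·(q(M)(M−K)+κ_t P_t)²·B − ϖ(M)·B'), and f(M) = log₂(1+S₁(M)) −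 log₂(1+S₂(M)). Assume κ_t > 0. Then the denominator of S₂(M) is positive for all sufficiently large M and lim_{M→∞} (f(M) − log₂ M) = log₂((ξ·P_t·γ̄/K)/(ξ·P_t·Ξ/K + (1−ξ)·P_t·(x − γ̄) + (κ_t+κ_r)·P_t·x + σ_k²)) − log₂(1 + ξ·M_E/(K·(1−ξ+κ_t))); in particular f(M) − log₂ M converges to a finite limit as M → ∞. -/
/-!
For `M > K` one has `q M * (M - K) = (1 - ξ) * Pt`, so `ϖ M` is
`((1 - ξ) * Pt) ^ 2 * ME * (M / (M - K))` plus a constant, which is bounded since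
`M / (M - K) → 1`. Hence `den₂ M / M → ((1 - ξ) * Pt + κt * Pt) ^ 2 * B > 0`: the denominator is
eventually positive, and, dividing the numerator and denominator of `S₂ M` by `M`, `S₂ M` tends to
`ξ * ME / (K * (1 - ξ + κt))`. On the other side `S₁ M = s * M` with a constant `s > 0`
(positivity uses `0 < γbar < x ≤ K * x`), and
`logb 2 (1 + s * M) - logb 2 M = logb 2 (1 / M + s) → logb 2 s`.
-/

open Filter Topology in
lemma tendsto_logb_one_add_mul_sub (s : ℝ) (hs : 0 < s) :
    Tendsto (fun M : ℕ => Real.logb 2 (1 + s * M) - Real.logb 2 M) atTop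
      (𝓝 (Real.logb 2 s)) := by
  have h1 : Tendsto (fun M : ℕ => ((M : ℝ))⁻¹ + s) atTop (𝓝 (0 + s)) :=
    tendsto_inv_atTop_nhds_zero_nat.add tendsto_const_nhds
  rw [zero_add] at h1
  have h2 := ((Real.continuousAt_log hs.ne').tendsto.comp h1).div_const (Real.log 2)
  refine h2.congr' ?_
  filter_upwards [eventually_gt_atTop 0] with M hM
  have hM' : (0 : ℝ) < M := by exact_mod_cast hM
  rw [← Real.logb_div (by positivity) hM'.ne']
  simp only [Function.comp, Real.logb]
  congr 2
  field_simp

open Filter Topology in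
lemma tendsto_natCast_div_sub (k : ℝ) :
    Tendsto (fun M : ℕ => (M : ℝ) / ((M : ℝ) - k)) atTop (𝓝 1) := by
  have h1 : Tendsto (fun M : ℕ => 1 - k * ((M : ℝ))⁻¹) atTop (𝓝 (1 - k * 0)) :=
    tendsto_const_nhds.sub (tendsto_inv_atTop_nhds_zero_nat.const_mul k)
  have h2 := h1.inv₀ (by norm_num)
  rw [mul_zero, sub_zero, inv_one] at h2
  refine h2.congr' ?_
  filter_upwards [eventually_gt_atTop 0] with M hM
  have hM' : (M : ℝ) ≠ 0 := by exact_mod_cast hM.ne'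
  rw [show 1 - k * ((M : ℝ))⁻¹ = ((M : ℝ) - k) / M by field_simp, inv_div]


/-- Corollary 3 of the paper. With the number N of RIS elements fixed,
the closed-form ergodic secrecy rate (48), as a function of the number M of BS
antennas, satisfies f(M) − log₂ M → finite limit, i.e. the secrecy rate scales as
O(log₂ M) while the eavesdropper's capacity stays bounded. -/
theorem stmt_17 (β₁ β₂ βI β₃ βIE σu2 σk2 τ ρ Pt κt κr : ℝ)
    (hβ₁ : 0 < β₁) (hβ₂ : 0 < β₂) (hβI : 0 < βI) (hβ₃ : 0 < β₃) (hβIE : 0 < βIE)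
    (hσu2 : 0 < σu2) (hσk2 : 0 < σk2) (hτ : 0 < τ) (hρ : 0 < ρ) (hPt : 0 < Pt)
    (hκt : 0 < κt) (hκr : 0 < κr)
    (N : ℕ) (hN : 0 < N) (K ME : ℕ) (hK : 1 ≤ K) (hME : 1 ≤ ME)
    (ξ : ℝ) (hξ : ξ ∈ Set.Ioc (0 : ℝ) 1)
    (x γbar Ξ B B' : ℝ)
    (hx : x = β₂ + βI * β₁ * N)
    (hγbar : γbar = x ^ 2 / (x + σu2 / (τ * ρ)))
    (hΞ : Ξ = K * x - γbar)
    (hB : B = (β₃ + βIE * β₁ * N) ^ 2)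
    (hB' : B' = β₃ ^ 2 + 2 * β₃ * βIE * N + βIE ^ 2 * β₁ ^ 2 * (N : ℝ) ^ 2)
    (p : ℝ) (hp : p = ξ * Pt / K)
    (q ϖ S₁ den₂ S₂ f : ℕ → ℝ)
    (hq : ∀ M : ℕ, q M = (1 - ξ) * Pt / ((M : ℝ) - K))
    (hϖ : ∀ M : ℕ, ϖ M = ME * (κt * Pt) ^ 2 + (q M) ^ 2 * ME * M * ((M : ℝ) - K) +
      2 * q M * ME * ((M : ℝ) - K) * κt * Pt)
    (hS₁ : ∀ M : ℕ, S₁ M = (ξ * Pt * M * γbar / K) /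
      (ξ * Pt * Ξ / K + (1 - ξ) * Pt * (x - γbar) + (κt + κr) * Pt * x + σk2))
    (hden₂ : ∀ M : ℕ, den₂ M =
      M * (q M * ((M : ℝ) - K) + κt * Pt) ^ 2 * B - ϖ M * B')
    (hS₂ : ∀ M : ℕ, S₂ M =
      p * ME * M * (q M * ((M : ℝ) - K) + κt * Pt) * B / den₂ M)
    (hf : ∀ M : ℕ, f M = Real.logb 2 (1 + S₁ M) - Real.logb 2 (1 + S₂ M)) :
    (∀ᶠ M : ℕ in Filter.atTop, 0 < den₂ M) ∧
    Filter.Tendsto (fun M : ℕ => f M - Real.logb 2 M) Filter.atTop (nhds (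
      Real.logb 2 ((ξ * Pt * γbar / K) /
        (ξ * Pt * Ξ / K + (1 - ξ) * Pt * (x - γbar) + (κt + κr) * Pt * x + σk2)) -
      Real.logb 2 (1 + ξ * ME / (K * (1 - ξ + κt))))) := by
  obtain ⟨hξ0, hξ1⟩ := hξ
  have hK1 : (1 : ℝ) ≤ K := by exact_mod_cast hK
  have hK0 : (0 : ℝ) < K := by linarith
  have hx0 : 0 < x := by rw [hx]; positivity
  have hγ0 : 0 < γbar := by rw [hγbar]; positivity
  have hγx : γbar < x := by
    rw [hγbar, div_lt_iff₀ (by positivity)]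
    have : 0 < x * (σu2 / (τ * ρ)) := by positivity
    nlinarith
  have hΞ0 : 0 < Ξ := by rw [hΞ]; nlinarith
  have hB0 : 0 < B := by rw [hB]; positivity
  have hD : 0 < ξ * Pt * Ξ / K + (1 - ξ) * Pt * (x - γbar) + (κt + κr) * Pt * x + σk2 := by
    have h1 : 0 ≤ (1 - ξ) * Pt * (x - γbar) :=
      mul_nonneg (mul_nonneg (by linarith) hPt.le) (by linarith)
    have h2 : 0 < ξ * Pt * Ξ / K := by positivity
    have h3 : 0 < (κt + κr) * Pt * x := by positivity
    linarith
  have hw : 0 < 1 - ξ + κt := by linarith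
  -- The total noise power `(1 - ξ) * Pt + κt * Pt` seen by the eavesdropper.
  obtain ⟨c, hc⟩ : ∃ c, c = (1 - ξ) * Pt + κt * Pt := ⟨_, rfl⟩
  have hcw : c = Pt * (1 - ξ + κt) := by rw [hc]; ring
  have hc0 : 0 < c := by rw [hcw]; positivity
  have hqM : ∀ M : ℕ, K < M → q M * ((M : ℝ) - K) = (1 - ξ) * Pt := by
    intro M hM
    have : (K : ℝ) < M := by exact_mod_cast hM
    rw [hq, div_mul_cancel₀ _ (by linarith)]
  have hϖM : ∀ M : ℕ, K < M → ϖ M = ME * (κt * Pt) ^ 2 +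
      ((1 - ξ) * Pt) ^ 2 * ME * ((M : ℝ) / ((M : ℝ) - K)) +
      2 * ((1 - ξ) * Pt) * ME * κt * Pt := by
    intro M hM
    have hMK : (M : ℝ) - K ≠ 0 := by
      have : (K : ℝ) < M := by exact_mod_cast hM
      linarith
    rw [hϖ, ← hqM M hM]
    field_simp
  have hϖlim : Filter.Tendsto ϖ Filter.atTop (nhds (ME * (κt * Pt) ^ 2 +
      ((1 - ξ) * Pt) ^ 2 * ME * 1 + 2 * ((1 - ξ) * Pt) * ME * κt * Pt)) := by
    refine Filter.Tendsto.congr' ?_ ((((tendsto_natCast_div_sub (K : ℝ)).const_mul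
      (((1 - ξ) * Pt) ^ 2 * ME)).const_add (ME * (κt * Pt) ^ 2)).add_const
      (2 * ((1 - ξ) * Pt) * ME * κt * Pt))
    filter_upwards [Filter.eventually_gt_atTop K] with M hM
    exact (hϖM M hM).symm
  have hdlim : Filter.Tendsto (fun M : ℕ => den₂ M / M) Filter.atTop (nhds (c ^ 2 * B)) := by
    have h := ((hϖlim.mul tendsto_inv_atTop_nhds_zero_nat).mul_const B').const_sub (c ^ 2 * B)
    rw [mul_zero, zero_mul, sub_zero] at h
    refine h.congr' ?_
    filter_upwards [Filter.eventually_gt_atTop K] with M hM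
    have hM0 : (M : ℝ) ≠ 0 := by exact_mod_cast (by omega : M ≠ 0)
    rw [hden₂, hqM M hM, ← hc]
    field_simp
  have hcB : 0 < c ^ 2 * B := by positivity
  have hS₂lim : Filter.Tendsto S₂ Filter.atTop (nhds (ξ * ME / (K * (1 - ξ + κt)))) := by
    have h := (tendsto_const_nhds (x := p * ME * c * B)).div hdlim hcB.ne'
    have he : p * ME * c * B / (c ^ 2 * B) = ξ * ME / (K * (1 - ξ + κt)) := by
      rw [hp, hcw]
      field_simp
    rw [he] at h
    refine h.congr' ?_
    filter_upwards [Filter.eventually_gt_atTop K] with M hM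
    rw [hS₂, hqM M hM, ← hc, Pi.div_apply, div_div_eq_mul_div]
    congr 1
    ring
  refine ⟨?_, ?_⟩
  · filter_upwards [hdlim.eventually (lt_mem_nhds hcB), Filter.eventually_gt_atTop K]
      with M h hM
    have hM0 : (0 : ℝ) < M := by exact_mod_cast (by omega : 0 < M)
    exact (div_pos_iff_of_pos_right hM0).mp h
  · have hpos : 0 < 1 + ξ * ME / (K * (1 - ξ + κt)) := by positivity
    have h2 := ((Real.continuousAt_log hpos.ne').tendsto.comp
      (hS₂lim.const_add 1)).div_const (Real.log 2)
    have h1 := tendsto_logb_one_add_mul_sub ((ξ * Pt * γbar / K) /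
      (ξ * Pt * Ξ / K + (1 - ξ) * Pt * (x - γbar) + (κt + κr) * Pt * x + σk2)) (by positivity)
    refine (h1.sub h2).congr fun M => ?_
    have hS : S₁ M = (ξ * Pt * γbar / K) / (ξ * Pt * Ξ / K + (1 - ξ) * Pt * (x - γbar) +
        (κt + κr) * Pt * x + σk2) * M := by
      rw [hS₁]
      ring
    rw [hf, hS]
    simp only [Function.comp, Real.logb]
    ring
end
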